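/- For every integer μ ≥ 1 and every integer N ≥ 2, W₁(M_N, Poisson(μ)^{⊗N}) ≤ √(2μ/π)/√N ≤ √μ/√N, where W₁ is the normalized Wasserstein-1 distance on ℕ^N: there exists a pair of random vectors X ~ M_N and Y ~ Poisson(μ)^{⊗N} on a common probability space with E[(1/N)·∑_{i=1}^N |X_i − Y_i|] ≤ √(2μ/π)/√N. -/

import Mathlib

open MeasureTheory ENNReal

noncomputable section

/-- The normalized Wasserstein-1 distance (valued in `ℝ≥0∞`) between two measures on
`ℕ^d`: the infimum over couplings of the expected normalized `ℓ¹` distance. -/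
def W1 (d : ℕ) (π₁ π₂ : Measure (Fin d → ℕ)) : ℝ≥0∞ :=
  ⨅ (π : Measure ((Fin d → ℕ) × (Fin d → ℕ))) (_ : π.map Prod.fst = π₁)
      (_ : π.map Prod.snd = π₂),
    ∫⁻ z, (∑ j : Fin d, (Nat.dist (z.1 j) (z.2 j) : ℝ≥0∞)) / (d : ℝ≥0∞) ∂π

/-- The multinomial distribution `M_N` on `𝒜_{N,μ}` (extended by `0` to `ℕ^N`):
`M_N(S) = ((Nμ)! / (S_1! ⋯ S_N!)) N^{-Nμ}` when `∑_i S_i = Nμ`. -/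
def MNmeas (N μ : ℕ) : Measure (Fin N → ℕ) :=
  Measure.sum (fun S : Fin N → ℕ =>
    (if ∑ i, S i = N * μ then
        ENNReal.ofReal (((N * μ).factorial : ℝ) / ((∏ i, (S i).factorial : ℕ) * (N : ℝ) ^ (N * μ)))
      else 0) • Measure.dirac S)

/-- The measure on `ℕ` associated with a (sub-)probability mass function `p`. -/
def seqMeas (p : ℕ → ℝ) : Measure ℕ :=
  Measure.sum (fun n : ℕ => ENNReal.ofReal (p n) • Measure.dirac n)

/-- The Poisson distribution with mean `μ` as a measure on `ℕ`. -/
def poissonMeas (μ : ℝ) : Measure ℕ :=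
  seqMeas (fun n => μ ^ n * Real.exp (-μ) / n.factorial)

/-!
Throw i.i.d. balls with law `ν` one after the other into the boxes `ι`. After a fixed number `n` of
balls the occupation numbers are multinomial, while after a Poisson(`r`) number `M` of balls,
independent of the throws, they are independent Poisson variables with means `r * ν {i}`. The two
vectors of occupation numbers differ exactly by the balls thrown between times `n` and `M`, so their
`ℓ¹` distance is `|M - n|`. For `r = n` its mean is `2 * n * P(M = n)`, because the increments of
`m ↦ m * P(M = m)` are `(n - m) * P(M = m)`; Stirling's lower bound for `n!` then gives
`√(2 * n / π)`.
-/

open ProbabilityTheory Filter Topology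
open scoped NNReal

section Poisson

lemma poissonMeas_coe (r : ℝ≥0) : poissonMeas r = poissonMeasure r := by
  simp only [poissonMeas, seqMeas, poissonMeasure, mul_comm]

lemma succ_mul_poissonMeasure_real_singleton (r : ℝ≥0) (m : ℕ) :
    (m + 1) * (poissonMeasure r).real {m + 1} = r * (poissonMeasure r).real {m} := by
  simp only [poissonMeasure_real_singleton, Nat.factorial_succ, Nat.cast_mul, Nat.cast_succ,
    pow_succ]
  field_simp

lemma tendsto_mul_poissonMeasure_real_singleton (r : ℝ≥0) :
    Tendsto (fun m : ℕ => m * (poissonMeasure r).real {m}) atTop (𝓝 0) := by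
  have hmass : Tendsto (fun m => (poissonMeasure r).real {m}) atTop (𝓝 0) := by
    simpa only [poissonMeasure_real_singleton] using
      (hasSum_one_poissonMeasure r).summable.tendsto_atTop_zero
  rw [← tendsto_add_atTop_iff_nat 1]
  simpa [succ_mul_poissonMeasure_real_singleton] using hmass.const_mul (r : ℝ)

lemma sum_range_abs_sub_mul_poissonMeasure_of_le (r : ℝ≥0) {M : ℕ} (hM : M ≤ ⌊r⌋₊ + 1) :
    ∑ m ∈ Finset.range M, |(m : ℝ) - r| * (poissonMeasure r).real {m}
      = M * (poissonMeasure r).real {M} := by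
  induction M with
  | zero => simp
  | succ M ih =>
    have hMr : (M : ℝ) ≤ r :=
      (Nat.cast_le.2 (Nat.succ_le_succ_iff.1 hM)).trans (mod_cast Nat.floor_le zero_le)
    rw [Finset.sum_range_succ, ih (by omega), abs_of_nonpos (sub_nonpos.2 hMr), Nat.cast_succ,
      succ_mul_poissonMeasure_real_singleton]
    ring

lemma sum_range_abs_sub_mul_poissonMeasure_of_ge (r : ℝ≥0) {M : ℕ} (hM : ⌊r⌋₊ + 1 ≤ M) :
    ∑ m ∈ Finset.range M, |(m : ℝ) - r| * (poissonMeasure r).real {m}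
      = 2 * (r * (poissonMeasure r).real {⌊r⌋₊}) - M * (poissonMeasure r).real {M} := by
  induction M, hM using Nat.le_induction with
  | base =>
    rw [sum_range_abs_sub_mul_poissonMeasure_of_le r le_rfl, Nat.cast_succ,
      succ_mul_poissonMeasure_real_singleton]
    ring
  | succ M hM ih =>
    have hrM : (r : ℝ) ≤ M := mod_cast (Nat.lt_of_floor_lt (Nat.lt_of_succ_le hM)).le
    rw [Finset.sum_range_succ, ih, abs_of_nonneg (sub_nonneg.2 hrM), Nat.cast_succ,
      succ_mul_poissonMeasure_real_singleton]
    ring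

lemma hasSum_abs_sub_mul_poissonMeasure (r : ℝ≥0) :
    HasSum (fun m : ℕ => |(m : ℝ) - r| * (poissonMeasure r).real {m})
      (2 * (r * (poissonMeasure r).real {⌊r⌋₊})) := by
  rw [hasSum_iff_tendsto_nat_of_nonneg fun m => by positivity]
  have hlim := (tendsto_mul_poissonMeasure_real_singleton r).const_sub
    (2 * (r * (poissonMeasure r).real {⌊r⌋₊}))
  rw [sub_zero] at hlim
  refine hlim.congr' ?_
  filter_upwards [eventually_ge_atTop (⌊r⌋₊ + 1)] with M hM
  exact (sum_range_abs_sub_mul_poissonMeasure_of_ge r hM).symm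

lemma lintegral_abs_sub_poissonMeasure (r : ℝ≥0) :
    ∫⁻ m : ℕ, ENNReal.ofReal |(m : ℝ) - r| ∂poissonMeasure r
      = ENNReal.ofReal (2 * (r * (poissonMeasure r).real {⌊r⌋₊})) := by
  have hsum := hasSum_abs_sub_mul_poissonMeasure r
  rw [lintegral_countable', ← hsum.tsum_eq,
    ENNReal.ofReal_tsum_of_nonneg (fun m => by positivity) hsum.summable]
  exact tsum_congr fun m => by rw [ENNReal.ofReal_mul (abs_nonneg _), ofReal_measureReal]

lemma sqrt_mul_poissonMeasure_real_singleton_self_le_one (n : ℕ) :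
    √(2 * Real.pi * n) * (poissonMeasure n).real {n} ≤ 1 := by
  have hexp : Real.exp (-(n : ℝ)) * (n : ℝ) ^ n = (n / Real.exp 1) ^ n := by
    rw [div_pow, ← Real.exp_nat_mul, mul_one, Real.exp_neg, inv_mul_eq_div]
  rw [poissonMeasure_real_singleton, NNReal.coe_natCast, hexp, ← mul_div_assoc,
    div_le_one (by positivity)]
  exact Stirling.le_factorial_stirling n

lemma two_mul_mul_poissonMeasure_real_singleton_self_le (n : ℕ) :
    2 * (n * (poissonMeasure n).real {n}) ≤ √(2 * n / Real.pi) := by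
  have hsqrt : √(2 * n / Real.pi) * √(2 * Real.pi * n) = 2 * n := by
    have hsq : 2 * n / Real.pi * (2 * Real.pi * n) = (2 * n : ℝ) ^ 2 := by
      field_simp
    rw [← Real.sqrt_mul (by positivity), hsq, Real.sqrt_sq (by positivity)]
  calc 2 * (n * (poissonMeasure n).real {n})
      = √(2 * n / Real.pi) * (√(2 * Real.pi * n) * (poissonMeasure n).real {n}) := by
        rw [← mul_assoc, ← mul_assoc, hsqrt]
    _ ≤ √(2 * n / Real.pi) :=
        mul_le_of_le_one_right (Real.sqrt_nonneg _)
          (sqrt_mul_poissonMeasure_real_singleton_self_le_one n)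

lemma natCast_dist_eq_abs_sub (m n : ℕ) : (Nat.dist m n : ℝ) = |(m : ℝ) - n| := by
  rcases le_total m n with h | h
  · rw [Nat.dist_eq_sub_of_le h, Nat.cast_sub h, abs_sub_comm,
      abs_of_nonneg (sub_nonneg.2 (Nat.cast_le.2 h))]
  · rw [Nat.dist_eq_sub_of_le_right h, Nat.cast_sub h,
      abs_of_nonneg (sub_nonneg.2 (Nat.cast_le.2 h))]

lemma lintegral_dist_poissonMeasure_le (n : ℕ) :
    ∫⁻ m, (Nat.dist n m : ℝ≥0∞) ∂poissonMeasure n ≤ ENNReal.ofReal √(2 * n / Real.pi) := by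
  have hdist (m : ℕ) : (Nat.dist n m : ℝ≥0∞) = ENNReal.ofReal |(m : ℝ) - (n : ℝ≥0)| := by
    rw [NNReal.coe_natCast, ← natCast_dist_eq_abs_sub, ENNReal.ofReal_natCast, Nat.dist_comm]
  simp only [hdist]
  rw [lintegral_abs_sub_poissonMeasure, Nat.floor_natCast, NNReal.coe_natCast]
  exact ENNReal.ofReal_le_ofReal (two_mul_mul_poissonMeasure_real_singleton_self_le n)

end Poisson

section Occupancy

variable {ι : Type*} [DecidableEq ι]

/-- The occupation numbers of the boxes `ι` after `k` balls, when the balls `0, 1, 2, …` are thrown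
successively into the boxes `x 0, x 1, x 2, …`. Keeping the whole sequence `x` puts the occupation
numbers at all times `k` on one space. -/
def occupancy (x : ℕ → ι) (k : ℕ) : ι → ℕ :=
  ∑ j ∈ Finset.range k, Pi.single (x j) 1

lemma occupancy_succ (x : ℕ → ι) (k : ℕ) :
    occupancy x (k + 1) = occupancy x k + Pi.single (x k) 1 :=
  Finset.sum_range_succ _ _

lemma monotone_occupancy (x : ℕ → ι) : Monotone (occupancy x) := fun _ _ h =>
  Finset.sum_le_sum_of_subset (Finset.range_mono h)

lemma sum_occupancy [Fintype ι] (x : ℕ → ι) (k : ℕ) : ∑ i, occupancy x k i = k := by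
  simp [occupancy, Finset.sum_comm (s := Finset.univ)]

lemma sum_dist_occupancy [Fintype ι] (x : ℕ → ι) (k l : ℕ) :
    ∑ i, Nat.dist (occupancy x k i) (occupancy x l i) = Nat.dist k l := by
  wlog h : k ≤ l generalizing k l
  · simpa only [Nat.dist_comm] using this l k (le_of_not_ge h)
  simp only [Nat.dist_eq_sub_of_le h, Nat.dist_eq_sub_of_le (monotone_occupancy x h _)]
  rw [Finset.sum_tsub_distrib _ fun i _ => monotone_occupancy x h i, sum_occupancy, sum_occupancy]

end Occupancy

section Multinomial

/-- The multinomial distribution: the law of the occupation numbers of the boxes `ι` after `n`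
independent balls with law `ν`, given by its point masses `n! * ∏ i, ν {i} ^ S i / (S i)!` on the
vectors `S` of total `n`. -/
def multinomialMeasure {ι : Type*} [Fintype ι] [MeasurableSpace ι] (n : ℕ) (ν : Measure ι) :
    Measure (ι → ℕ) :=
  Measure.sum fun S => (if ∑ i, S i = n then
    ENNReal.ofReal (n.factorial * ∏ i, ν.real {i} ^ S i / (S i).factorial) else 0) •
      Measure.dirac S

lemma succ_mul_prod_pow_div_factorial_add_single {ι : Type*} [Fintype ι] [DecidableEq ι]
    (p : ι → ℝ) (S : ι → ℕ) (i : ι) :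
    (S i + 1) * ∏ j, p j ^ (S + Pi.single i 1 : ι → ℕ) j
        / ((S + Pi.single i 1 : ι → ℕ) j).factorial
      = p i * ∏ j, p j ^ S j / (S j).factorial := by
  have hne : ∏ j ∈ Finset.univ.erase i, p j ^ (S + Pi.single i 1 : ι → ℕ) j
        / ((S + Pi.single i 1 : ι → ℕ) j).factorial
      = ∏ j ∈ Finset.univ.erase i, p j ^ S j / (S j).factorial :=
    Finset.prod_congr rfl fun j hj => by simp [Finset.ne_of_mem_erase hj]
  rw [← Finset.mul_prod_erase _ _ (Finset.mem_univ i),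
    ← Finset.mul_prod_erase _ _ (Finset.mem_univ i), hne, Pi.add_apply, Pi.single_eq_same,
    Nat.factorial_succ, pow_succ]
  push_cast
  field_simp

lemma sum_measureReal_inter_preimage_singleton {Ω β : Type*} [MeasurableSpace Ω]
    {P : Measure Ω} [IsFiniteMeasure P] [Fintype β] [MeasurableSpace β]
    [MeasurableSingletonClass β] {s : Set Ω} (hs : MeasurableSet s) {f : Ω → β}
    (hf : Measurable f) : ∑ b, P.real (s ∩ f ⁻¹' {b}) = P.real s := by
  simpa [measureReal_restrict_apply' hs, Set.inter_comm s] using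
    sum_measureReal_preimage_singleton (μ := P.restrict s) Finset.univ
      fun b _ => hf (measurableSet_singleton b)

lemma pi_poissonMeasure_real_singleton {ι : Type*} [Fintype ι] [MeasurableSpace ι]
    [MeasurableSingletonClass ι] (ν : Measure ι) [IsProbabilityMeasure ν] (r : ℝ≥0) (S : ι → ℕ) :
    (Measure.pi fun i => poissonMeasure (r * (ν {i}).toNNReal)).real {S}
      = (poissonMeasure r).real {∑ i, S i}
        * ((∑ i, S i).factorial * ∏ i, ν.real {i} ^ S i / (S i).factorial) := by
  have hexp : ∏ i, Real.exp (-(r * ν.real {i})) = Real.exp (-r) := by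
    rw [← Real.exp_sum, Finset.sum_neg_distrib, ← Finset.mul_sum, sum_measureReal_singleton,
      Finset.coe_univ, probReal_univ, mul_one]
  calc (Measure.pi fun i => poissonMeasure (r * (ν {i}).toNNReal)).real {S}
      = ∏ i, Real.exp (-(r * ν.real {i})) * (r * ν.real {i}) ^ S i / (S i).factorial := by
        rw [measureReal_def, Measure.pi_singleton, ENNReal.toReal_prod]
        exact Finset.prod_congr rfl fun i _ => poissonMeasure_real_singleton _ _
    _ = Real.exp (-r) * r ^ (∑ i, S i) * ∏ i, ν.real {i} ^ S i / (S i).factorial := by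
        simp only [mul_pow, mul_div_assoc, Finset.prod_mul_distrib, hexp,
          Finset.prod_pow_eq_pow_sum, mul_assoc]
    _ = (poissonMeasure r).real {∑ i, S i}
          * ((∑ i, S i).factorial * ∏ i, ν.real {i} ^ S i / (S i).factorial) := by
        rw [poissonMeasure_real_singleton]
        field_simp

end Multinomial

section IID

variable {ι Ω : Type*} [DecidableEq ι] [MeasurableSpace ι] [MeasurableSingletonClass ι]
  [MeasurableSpace Ω] {P : Measure Ω} {ν : Measure ι} {X : ℕ → Ω → ι}

section Countable

variable [Countable ι]

lemma measurable_occupancy (hX : ∀ j, Measurable (X j)) (k : ℕ) :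
    Measurable fun ω => occupancy (X · ω) k :=
  Finset.measurable_fun_sum _ fun j _ =>
    (Measurable.of_discrete (f := fun i => Pi.single i 1)).comp (hX j)

lemma measurable_occupancy_uncurry (hX : ∀ j, Measurable (X j)) :
    Measurable fun z : ℕ × Ω => occupancy (X · z.2) z.1 :=
  measurable_from_prod_countable_right (measurable_occupancy hX)

lemma indepFun_occupancy (hX : ∀ j, Measurable (X j)) (hindep : iIndepFun X P) (k : ℕ) :
    IndepFun (fun ω => occupancy (X · ω) k) (X k) P := by
  have hcomp := (hindep.indepFun_finset (Finset.range k) {k} (by simp) hX).comp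
    (φ := fun y => ∑ j, (Pi.single (y j) 1 : ι → ℕ)) (ψ := fun y => y ⟨k, by simp⟩)
    .of_discrete .of_discrete
  convert! hcomp using 2 with ω
  simp [occupancy, ← Finset.sum_coe_sort (Finset.range k)]

lemma measureReal_occupancy_succ_inter (hX : ∀ j, Measurable (X j))
    (hlaw : ∀ j, HasLaw (X j) ν P) (hindep : iIndepFun X P) (k : ℕ) (T : ι → ℕ) (i : ι) :
    P.real ({ω | occupancy (X · ω) (k + 1) = T + Pi.single i 1} ∩ X k ⁻¹' {i})
      = P.real {ω | occupancy (X · ω) k = T} * ν.real {i} := by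
  have hset : {ω | occupancy (X · ω) (k + 1) = T + Pi.single i 1} ∩ X k ⁻¹' {i}
      = (fun ω => occupancy (X · ω) k) ⁻¹' {T} ∩ X k ⁻¹' {i} := by
    ext ω
    refine and_congr_left fun (hω : X k ω = i) => ?_
    simp [occupancy_succ, hω]
  rw [hset, measureReal_def, (indepFun_occupancy hX hindep k).measure_inter_preimage_eq_mul _ _
    (measurableSet_singleton T) (measurableSet_singleton i), ENNReal.toReal_mul, ← (hlaw k).map_eq,
    map_measureReal_apply (hX k) (measurableSet_singleton i)]
  rfl

end Countable

variable [Fintype ι] [IsProbabilityMeasure P]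

lemma measureReal_occupancy_eq (hX : ∀ j, Measurable (X j)) (hlaw : ∀ j, HasLaw (X j) ν P)
    (hindep : iIndepFun X P) {k : ℕ} {S : ι → ℕ} (hS : ∑ i, S i = k) :
    P.real {ω | occupancy (X · ω) k = S}
      = k.factorial * ∏ i, ν.real {i} ^ S i / (S i).factorial := by
  induction k generalizing S with
  | zero =>
    obtain rfl : S = 0 := funext fun i => by simpa using Finset.sum_eq_zero_iff.1 hS i
    simp [occupancy]
  | succ k ih =>
    have hlast (i : ι) : P.real ({ω | occupancy (X · ω) (k + 1) = S} ∩ X k ⁻¹' {i})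
        = S i * (k.factorial * ∏ j, ν.real {j} ^ S j / (S j).factorial) := by
      by_cases hi : S i = 0
      · have hempty : {ω | occupancy (X · ω) (k + 1) = S} ∩ X k ⁻¹' {i} = ∅ := by
          refine Set.eq_empty_of_forall_notMem fun ω hω => ?_
          obtain ⟨rfl, rfl⟩ := hω
          simp [occupancy_succ] at hi
        simp [hempty, hi]
      · obtain ⟨T, rfl⟩ : ∃ T, S = T + Pi.single i 1 :=
          ⟨S - Pi.single i 1, (tsub_add_cancel_of_le <| update_le_iff.2
            ⟨Nat.one_le_iff_ne_zero.2 hi, fun _ _ => zero_le⟩).symm⟩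
        have hT : ∑ j, T j = k := by simpa [Finset.sum_add_distrib] using hS
        rw [measureReal_occupancy_succ_inter hX hlaw hindep, ih hT, mul_left_comm, Pi.add_apply,
          Pi.single_eq_same, Nat.cast_succ,
          succ_mul_prod_pow_div_factorial_add_single (fun j => ν.real {j})]
        ring
    calc P.real {ω | occupancy (X · ω) (k + 1) = S}
        = ∑ i, P.real ({ω | occupancy (X · ω) (k + 1) = S} ∩ X k ⁻¹' {i}) :=
          (sum_measureReal_inter_preimage_singleton
            (measurable_occupancy hX _ (measurableSet_singleton S)) (hX k)).symm
      _ = (∑ i, S i : ℕ) * (k.factorial * ∏ i, ν.real {i} ^ S i / (S i).factorial) := by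
          rw [Finset.sum_congr rfl fun i _ => hlast i, ← Finset.sum_mul, Nat.cast_sum]
      _ = (k + 1).factorial * ∏ i, ν.real {i} ^ S i / (S i).factorial := by
          rw [hS, Nat.factorial_succ, Nat.cast_mul, mul_assoc]

lemma map_occupancy (hX : ∀ j, Measurable (X j)) (hlaw : ∀ j, HasLaw (X j) ν P)
    (hindep : iIndepFun X P) (n : ℕ) :
    P.map (fun ω => occupancy (X · ω) n) = multinomialMeasure n ν := by
  refine Measure.ext_of_singleton fun S => ?_
  rw [Measure.map_apply (measurable_occupancy hX n) .of_discrete, multinomialMeasure,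
    Measure.sum_smul_dirac_singleton]
  split_ifs with hS
  · rw [← measureReal_occupancy_eq hX hlaw hindep hS, ofReal_measureReal]
    rfl
  · have hempty : (fun ω => occupancy (X · ω) n) ⁻¹' {S} = ∅ :=
      Set.eq_empty_of_forall_notMem fun ω hω => hS (Set.mem_singleton_iff.1 hω ▸ sum_occupancy _ n)
    rw [hempty, measure_empty]

lemma map_occupancy_poissonMeasure_prod (hX : ∀ j, Measurable (X j))
    (hlaw : ∀ j, HasLaw (X j) ν P) (hindep : iIndepFun X P) (r : ℝ≥0) :
    ((poissonMeasure r).prod P).map (fun z => occupancy (X · z.2) z.1)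
      = Measure.pi fun i => poissonMeasure (r * (ν {i}).toNNReal) := by
  have : IsProbabilityMeasure ν := (hlaw 0).isProbabilityMeasure_iff.1 ‹_›
  refine Measure.ext_of_singleton fun S => ?_
  have hset : (fun z : ℕ × Ω => occupancy (X · z.2) z.1) ⁻¹' {S}
      = {∑ i, S i} ×ˢ {ω | occupancy (X · ω) (∑ i, S i) = S} := by
    ext ⟨m, ω⟩
    constructor
    · rintro rfl
      simp [sum_occupancy]
    · rintro ⟨rfl, hω⟩
      exact hω
  rw [← ofReal_measureReal, ← ofReal_measureReal,
    map_measureReal_apply (measurable_occupancy_uncurry hX) .of_discrete, hset,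
    measureReal_prod_prod, measureReal_occupancy_eq hX hlaw hindep rfl,
    pi_poissonMeasure_real_singleton]

end IID

section Wasserstein

lemma W1_map_le {Ω : Type*} [MeasurableSpace Ω] (P : Measure Ω) {d : ℕ} {X Y : Ω → Fin d → ℕ}
    (hX : Measurable X) (hY : Measurable Y) :
    W1 d (P.map X) (P.map Y)
      ≤ ∫⁻ ω, (∑ j, (Nat.dist (X ω j) (Y ω j) : ℝ≥0∞)) / (d : ℝ≥0∞) ∂P := by
  rw [← lintegral_map (f := fun z : (Fin d → ℕ) × (Fin d → ℕ) =>
    (∑ j, (Nat.dist (z.1 j) (z.2 j) : ℝ≥0∞)) / (d : ℝ≥0∞)) .of_discrete (hX.prodMk hY)]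
  exact iInf_le_of_le _ <| iInf₂_le_of_le (Measure.map_map measurable_fst (hX.prodMk hY))
    (Measure.map_map measurable_snd (hX.prodMk hY)) le_rfl

lemma W1_multinomialMeasure_pi_poissonMeasure_le {d : ℕ} (n : ℕ) (r : ℝ≥0)
    (ν : Measure (Fin d)) [IsProbabilityMeasure ν] :
    W1 d (multinomialMeasure n ν) (Measure.pi fun i => poissonMeasure (r * (ν {i}).toNNReal))
      ≤ (∫⁻ m, (Nat.dist n m : ℝ≥0∞) ∂poissonMeasure r) / d := by
  obtain ⟨Ω, _, P, X, hX, hlaw, hindep, _⟩ := exists_iid ℕ ν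
  have hfst : ((poissonMeasure r).prod P).map (fun z => occupancy (X · z.2) n)
      = multinomialMeasure n ν :=
    calc ((poissonMeasure r).prod P).map (fun z => occupancy (X · z.2) n)
        = (((poissonMeasure r).prod P).map Prod.snd).map (fun ω => occupancy (X · ω) n) :=
          (Measure.map_map (measurable_occupancy hX n) measurable_snd).symm
      _ = multinomialMeasure n ν := by
          rw [measurePreserving_snd.map_eq, map_occupancy hX hlaw hindep]
  have hdist (z : ℕ × Ω) : (∑ j, (Nat.dist (occupancy (X · z.2) n j)
      (occupancy (X · z.2) z.1 j) : ℝ≥0∞)) / (d : ℝ≥0∞) = Nat.dist n z.1 / d := by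
    rw [← Nat.cast_sum, sum_dist_occupancy]
  calc W1 d (multinomialMeasure n ν) (Measure.pi fun i => poissonMeasure (r * (ν {i}).toNNReal))
      ≤ ∫⁻ z, (Nat.dist n z.1 : ℝ≥0∞) / d ∂(poissonMeasure r).prod P := by
        rw [← hfst, ← map_occupancy_poissonMeasure_prod hX hlaw hindep]
        exact (W1_map_le _ ((measurable_occupancy hX n).comp measurable_snd)
          (measurable_occupancy_uncurry hX)).trans_eq (lintegral_congr hdist)
    _ = ∫⁻ m, (Nat.dist n m : ℝ≥0∞) / d ∂poissonMeasure r :=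
        measurePreserving_fst.lintegral_comp (f := fun m => (Nat.dist n m : ℝ≥0∞) / d) .of_discrete
    _ = (∫⁻ m, (Nat.dist n m : ℝ≥0∞) ∂poissonMeasure r) / d := by
        simp only [div_eq_mul_inv, lintegral_mul_const _ Measurable.of_discrete]

lemma two_mul_div_pi_le {x : ℝ} (hx : 0 ≤ x) : 2 * x / Real.pi ≤ x := by
  rw [div_le_iff₀ Real.pi_pos, mul_comm]
  exact mul_le_mul_of_nonneg_left Real.two_le_pi hx

theorem multinomial_chaotic_general {d : ℕ} (n : ℕ) (ν : Measure (Fin d))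
    [IsProbabilityMeasure ν] :
    W1 d (multinomialMeasure n ν) (Measure.pi fun i => poissonMeas (n * ν.real {i}))
        ≤ ENNReal.ofReal (√(2 * n / Real.pi) / d) ∧
      √(2 * n / Real.pi) / d ≤ √n / d := by
  constructor
  · have hd : 0 < d := Fin.pos_iff_nonempty.2 (nonempty_of_isProbabilityMeasure ν)
    have hrate (i : Fin d) : poissonMeas (n * ν.real {i})
        = poissonMeasure (n * (ν {i}).toNNReal) := poissonMeas_coe (n * (ν {i}).toNNReal)
    simp only [hrate]
    rw [ENNReal.ofReal_div_of_pos (Nat.cast_pos.2 hd), ENNReal.ofReal_natCast]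
    exact (W1_multinomialMeasure_pi_poissonMeasure_le n n ν).trans
      (ENNReal.div_le_div_right (lintegral_dist_poissonMeasure_le n) _)
  · gcongr
    exact two_mul_div_pi_le n.cast_nonneg

end Wasserstein

section Uniform

lemma uniformOn_univ_real_singleton {α : Type*} [Fintype α] [MeasurableSpace α]
    [MeasurableSingletonClass α] (a : α) :
    (uniformOn (Set.univ : Set α)).real {a} = (Fintype.card α : ℝ)⁻¹ := by
  simp [measureReal_def, uniformOn_univ]

lemma MNmeas_eq_multinomialMeasure_uniformOn (N μ : ℕ) :
    MNmeas N μ = multinomialMeasure (N * μ) (uniformOn (Set.univ : Set (Fin N))) := by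
  refine congrArg Measure.sum (funext fun S => congrArg (· • Measure.dirac S) ?_)
  refine if_ctx_congr Iff.rfl (fun hS => congrArg ENNReal.ofReal ?_) fun _ => rfl
  simp only [uniformOn_univ_real_singleton, Fintype.card_fin]
  rw [Finset.prod_div_distrib, Finset.prod_pow_eq_pow_sum, hS, inv_pow, Nat.cast_prod]
  ring

lemma sqrt_mul_div_self {a : ℝ} (ha : 0 ≤ a) (x : ℝ) : √(a * x) / a = √x / √a := by
  rw [Real.sqrt_mul ha, mul_div_right_comm, Real.sqrt_div_self, inv_mul_eq_div]

end Uniform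

/-- Chaos of the multinomial towards the Poisson product measure:
`W₁(M_N, Poisson(μ)^{⊗N}) ≤ √(2μ/π)/√N ≤ √μ/√N`. -/
theorem multinomial_chaotic (N μ : ℕ) (hN : 2 ≤ N) (hμ : 1 ≤ μ) :
    W1 N (MNmeas N μ) (Measure.pi (fun _ : Fin N => poissonMeas μ))
        ≤ ENNReal.ofReal (Real.sqrt (2 * μ / Real.pi) / Real.sqrt N) ∧
      Real.sqrt (2 * μ / Real.pi) / Real.sqrt N ≤ Real.sqrt μ / Real.sqrt N := by
  have : NeZero N := ⟨by omega⟩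
  have hrate (i : Fin N) : (N * μ : ℝ) * (uniformOn Set.univ).real {i} = μ := by
    rw [uniformOn_univ_real_singleton, Fintype.card_fin, mul_right_comm,
      mul_inv_cancel₀ (NeZero.ne _), one_mul]
  have hbound : √(2 * (N * μ) / Real.pi) / N = √(2 * μ / Real.pi) / √N := by
    rw [mul_left_comm, mul_div_assoc, sqrt_mul_div_self N.cast_nonneg]
  simpa only [← MNmeas_eq_multinomialMeasure_uniformOn, Nat.cast_mul, hrate, hbound,
    sqrt_mul_div_self N.cast_nonneg] using
    multinomial_chaotic_general (N * μ) (uniformOn (Set.univ : Set (Fin N)))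

end
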